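/- Let Ψ : ℝ³ → ℝ be four times continuously differentiable and let q ∈ ℝ³ be a point at which the Hessian is diagonal: HΨ(q) = diag(λ₁, λ₂, λ₃) with λ₁ ≠ λ₂ and λ₁ ≠ λ₃. Let (μ, v) be an eigenpair field of HΨ near q with v(q) = e₁, and suppose μ and v are twice continuously differentiable near q. Then the mixed second derivative of the eigenvalue field is ∂₁∂₂μ(q) = ∂₁∂₁∂₁∂₂Ψ(q) + 2·∂₁∂₁∂₂Ψ(q)·∂₁∂₂∂₂Ψ(q)/(λ₁ − λ₂) + 2·∂₁∂₁∂₃Ψ(q)·∂₁∂₂∂₃Ψ(q)/(λ₁ − λ₃). (Eigenframe identity: ∂ₓ∂ᵧλ₁ = T₁₁₁₂ + 2T₁₁₂T₁₂₂/(T₁₁ − T₂₂) + 2T₁₁₃T₁₂₃/(T₁₁ − T₃₃).) -/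

import Mathlib

/-- The partial derivative `∂ᵢ f` of a scalar field on Euclidean ℝ³. -/
noncomputable def pd (i : Fin 3) (f : EuclideanSpace ℝ (Fin 3) → ℝ)
    (x : EuclideanSpace ℝ (Fin 3)) : ℝ :=
  fderiv ℝ f x (EuclideanSpace.single i 1)

/-!
This is second-order perturbation theory for a simple eigenvalue of a matrix field `A`, applied to
the Hessian of `Ψ`. Let `A(q) = diag(d)` and `v(q) = eₖ`. The first derivative of `A v = μ v` gives
`∂μ = ∂Aₖₖ` in row `k` and `∂vₗ = ∂Aₗₖ / (dₖ - dₗ)` in the rows `l ≠ k`. In the second derivative of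
row `k`, the terms with derivatives of `vₖ` cancel because `∂μ = ∂Aₖₖ` and `μ(q) = dₖ`; the
remaining ones express `∂∂μ` through the `∂vₗ`, `l ≠ k`.
-/

open Filter Topology

/-- The derivative of a scalar field `f` along the vector `a`. It is defined through the Fréchet
derivative rather than as `lineDeriv`, so that `pd i` is the case `a = eᵢ` by definition; both agree
where `f` is differentiable. -/
noncomputable def dirDeriv {𝕜 E : Type*} [NontriviallyNormedField 𝕜] [NormedAddCommGroup E]
    [NormedSpace 𝕜 E] (a : E) (f : E → 𝕜) (x : E) : 𝕜 :=
  fderiv 𝕜 f x a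

local notation "∂[" a "]" => dirDeriv a

section DirectionalDerivative

variable {𝕜 : Type*} [NontriviallyNormedField 𝕜] {E : Type*} [NormedAddCommGroup E]
  [NormedSpace 𝕜 E] {ι : Type*} {a b : E} {f g : E → 𝕜} {x : E}

theorem dirDeriv_congr (a : E) (h : f =ᶠ[𝓝 x] g) : ∂[a] f =ᶠ[𝓝 x] ∂[a] g :=
  (h.fderiv (𝕜 := 𝕜)).mono fun _ hy => DFunLike.congr_fun hy a

theorem contDiffAt_dirDeriv {m n : WithTop ℕ∞} (a : E) (hf : ContDiffAt 𝕜 n f x)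
    (hmn : m + 1 ≤ n) : ContDiffAt 𝕜 m (∂[a] f) x :=
  (hf.fderiv_right hmn).clm_apply contDiffAt_const

theorem differentiableAt_dirDeriv (a : E) (hf : ContDiffAt 𝕜 2 f x) :
    DifferentiableAt 𝕜 (∂[a] f) x :=
  (contDiffAt_dirDeriv (m := 1) a hf (by norm_num)).differentiableAt one_ne_zero

theorem dirDeriv_add (hf : DifferentiableAt 𝕜 f x) (hg : DifferentiableAt 𝕜 g x) :
    ∂[a] (fun y => f y + g y) x = ∂[a] f x + ∂[a] g x := by
  simp only [dirDeriv, fderiv_fun_add hf hg, add_apply]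

theorem dirDeriv_sum {s : Finset ι} {f : ι → E → 𝕜} (hf : ∀ i ∈ s, DifferentiableAt 𝕜 (f i) x) :
    ∂[a] (fun y => ∑ i ∈ s, f i y) x = ∑ i ∈ s, ∂[a] (f i) x := by
  simp only [dirDeriv, fderiv_fun_sum hf, sum_apply]

theorem dirDeriv_mul (hf : DifferentiableAt 𝕜 f x) (hg : DifferentiableAt 𝕜 g x) :
    ∂[a] (fun y => f y * g y) x = ∂[a] f x * g x + f x * ∂[a] g x := by
  simp only [dirDeriv, fderiv_fun_mul hf hg, add_apply, smul_apply, smul_eq_mul]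
  ring

theorem dirDeriv_dirDeriv_sum {s : Finset ι} {f : ι → E → 𝕜}
    (hf : ∀ i ∈ s, ContDiffAt 𝕜 2 (f i) x) :
    ∂[a] (∂[b] (fun y => ∑ i ∈ s, f i y)) x = ∑ i ∈ s, ∂[a] (∂[b] (f i)) x := by
  have sum_rule : ∂[b] (fun y => ∑ i ∈ s, f i y) =ᶠ[𝓝 x] fun y => ∑ i ∈ s, ∂[b] (f i) y := by
    filter_upwards [(Finset.eventually_all s).2 fun i hi => (hf i hi).eventually (by simp)]
      with y hy
    exact dirDeriv_sum fun i hi => (hy i hi).differentiableAt two_ne_zero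
  rw [(dirDeriv_congr a sum_rule).eq_of_nhds,
    dirDeriv_sum fun i hi => differentiableAt_dirDeriv b (hf i hi)]

theorem dirDeriv_dirDeriv_mul (hf : ContDiffAt 𝕜 2 f x) (hg : ContDiffAt 𝕜 2 g x) :
    ∂[a] (∂[b] (fun y => f y * g y)) x =
      ∂[a] (∂[b] f) x * g x + ∂[b] f x * ∂[a] g x
        + (∂[a] f x * ∂[b] g x + f x * ∂[a] (∂[b] g) x) := by
  have product_rule :
      ∂[b] (fun y => f y * g y) =ᶠ[𝓝 x] fun y => ∂[b] f y * g y + f y * ∂[b] g y := by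
    filter_upwards [hf.eventually (by simp), hg.eventually (by simp)] with y hfy hgy
    exact dirDeriv_mul (hfy.differentiableAt two_ne_zero) (hgy.differentiableAt two_ne_zero)
  have df := hf.differentiableAt two_ne_zero
  have dg := hg.differentiableAt two_ne_zero
  have ddf := differentiableAt_dirDeriv b hf
  have ddg := differentiableAt_dirDeriv b hg
  rw [(dirDeriv_congr a product_rule).eq_of_nhds, dirDeriv_add (ddf.fun_mul dg) (df.fun_mul ddg),
    dirDeriv_mul ddf dg, dirDeriv_mul df ddg]

theorem dirDeriv_dirDeriv_eq_fderiv_fderiv (hf : ContDiffAt 𝕜 2 f x) :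
    ∂[a] (∂[b] f) x = fderiv 𝕜 (fderiv 𝕜 f) x a b := by
  have hd : DifferentiableAt 𝕜 (fderiv 𝕜 f) x :=
    (hf.fderiv_right (m := 1) (by norm_num)).differentiableAt one_ne_zero
  change fderiv 𝕜 (fun y => fderiv 𝕜 f y b) x a = _
  simp [fderiv_clm_apply hd (differentiableAt_const b)]

theorem dirDeriv_comm [IsRCLikeNormedField 𝕜] (a b : E) (hf : ContDiffAt 𝕜 2 f x) :
    ∂[a] (∂[b] f) x = ∂[b] (∂[a] f) x := by
  rw [dirDeriv_dirDeriv_eq_fderiv_fderiv hf, dirDeriv_dirDeriv_eq_fderiv_fderiv hf,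
    (hf.isSymmSndFDerivAt (by simp)).eq]

theorem dirDeriv_comm_eventuallyEq [IsRCLikeNormedField 𝕜] (a b : E) (hf : ContDiffAt 𝕜 2 f x) :
    ∂[a] (∂[b] f) =ᶠ[𝓝 x] ∂[b] (∂[a] f) :=
  (hf.eventually (by simp)).mono fun _ hy => dirDeriv_comm a b hy

end DirectionalDerivative

open Matrix

section EigenpairField

theorem eigenvalue_eq_of_diagonal {R ι : Type*} [Semiring R] [Fintype ι] [DecidableEq ι]
    {M : Matrix ι ι R} {d w : ι → R} {c : R} {k : ι} (hM : M = diagonal d)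
    (hw : w = Pi.single k 1) (heig : M *ᵥ w = c • w) : c = d k := by
  simpa [hM, hw, mulVec_diagonal] using (congrFun heig k).symm

theorem eventuallyEq_row_of_eigenpair {X R ι : Type*} [NonUnitalNonAssocSemiring R] [Fintype ι]
    {A : X → Matrix ι ι R} {μ : X → R} {v : X → ι → R} {F : Filter X}
    (heig : ∀ᶠ x in F, A x *ᵥ v x = μ x • v x) (i : ι) :
    (fun x => ∑ j, A x i j * v x j) =ᶠ[F] fun x => μ x * v x i :=
  heig.mono fun _ hx => congrFun hx i

variable {𝕜 : Type*} [NontriviallyNormedField 𝕜] {E : Type*} [NormedAddCommGroup E]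
  [NormedSpace 𝕜 E] {ι : Type*} [Fintype ι] {A : E → Matrix ι ι 𝕜} {μ : E → 𝕜} {v : E → ι → 𝕜}
  {q : E}

theorem contDiffAt_eigenvalue {n : WithTop ℕ∞} {k : ι} (hA : ∀ j, ContDiffAt 𝕜 n (A · k j) q)
    (heig : ∀ᶠ x in 𝓝 q, A x *ᵥ v x = μ x • v x) (hv : ContDiffAt 𝕜 n v q) (hk : v q k ≠ 0) :
    ContDiffAt 𝕜 n μ q := by
  have hvj := contDiffAt_pi.1 hv
  have quotient : (fun x => (∑ j, A x k j * v x j) / v x k) =ᶠ[𝓝 q] μ := by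
    filter_upwards [eventuallyEq_row_of_eigenpair heig k, (hvj k).continuousAt.eventually_ne hk]
      with x hx hne
    rw [hx, mul_div_cancel_right₀ _ hne]
  exact ((ContDiffAt.sum fun j _ => (hA j).mul (hvj j)).div (hvj k) hk).congr_of_eventuallyEq
    quotient.symm

variable [DecidableEq ι] {d : ι → 𝕜} {k : ι} {a b : E}

theorem dirDeriv_row_of_eigenpair {i : ι} (hA : ∀ j, DifferentiableAt 𝕜 (A · i j) q)
    (hq : A q = diagonal d) (heig : ∀ᶠ x in 𝓝 q, A x *ᵥ v x = μ x • v x)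
    (hvq : v q = Pi.single k 1) (hμ : DifferentiableAt 𝕜 μ q) (hv : DifferentiableAt 𝕜 v q) :
    ∂[a] (A · i k) q + d i * ∂[a] (v · i) q =
      ∂[a] μ q * (Pi.single k 1 : ι → 𝕜) i + d k * ∂[a] (v · i) q := by
  have hvj := differentiableAt_pi.1 hv
  have h := (dirDeriv_congr a (eventuallyEq_row_of_eigenpair heig i)).eq_of_nhds
  rw [dirDeriv_sum fun j _ => (hA j).fun_mul (hvj j), dirDeriv_mul hμ (hvj i)] at h
  simpa [dirDeriv_mul (hA _) (hvj _), Finset.sum_add_distrib, hq, hvq, diagonal_apply,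
    Pi.single_apply, eigenvalue_eq_of_diagonal hq hvq heig.self_of_nhds] using h

theorem dirDeriv_eigenvalue (hA : ∀ j, DifferentiableAt 𝕜 (A · k j) q)
    (hq : A q = diagonal d) (heig : ∀ᶠ x in 𝓝 q, A x *ᵥ v x = μ x • v x)
    (hvq : v q = Pi.single k 1) (hμ : DifferentiableAt 𝕜 μ q) (hv : DifferentiableAt 𝕜 v q) :
    ∂[a] μ q = ∂[a] (A · k k) q := by
  simpa using (dirDeriv_row_of_eigenpair hA hq heig hvq hμ hv).symm

theorem dirDeriv_eigenvector {l : ι} (hd : d k ≠ d l)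
    (hA : ∀ j, DifferentiableAt 𝕜 (A · l j) q) (hq : A q = diagonal d)
    (heig : ∀ᶠ x in 𝓝 q, A x *ᵥ v x = μ x • v x) (hvq : v q = Pi.single k 1)
    (hμ : DifferentiableAt 𝕜 μ q) (hv : DifferentiableAt 𝕜 v q) :
    ∂[a] (v · l) q = ∂[a] (A · l k) q / (d k - d l) := by
  have row := dirDeriv_row_of_eigenpair (a := a) hA hq heig hvq hμ hv
  rw [Pi.single_eq_of_ne fun hlk => hd (congrArg d hlk.symm)] at row
  rw [eq_div_iff (sub_ne_zero.2 hd)]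
  linear_combination -row

theorem dirDeriv_dirDeriv_row_of_eigenpair (hA : ∀ j, ContDiffAt 𝕜 2 (A · k j) q)
    (hq : A q = diagonal d) (heig : ∀ᶠ x in 𝓝 q, A x *ᵥ v x = μ x • v x)
    (hvq : v q = Pi.single k 1) (hμ : ContDiffAt 𝕜 2 μ q) (hv : ContDiffAt 𝕜 2 v q) :
    ∂[a] (∂[b] (A · k k)) q
        + ∑ l, (∂[a] (A · k l) q * ∂[b] (v · l) q + ∂[b] (A · k l) q * ∂[a] (v · l) q) =
      ∂[a] (∂[b] μ) q + (∂[a] μ q * ∂[b] (v · k) q + ∂[b] μ q * ∂[a] (v · k) q) := by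
  have hvj := contDiffAt_pi.1 hv
  have h := (dirDeriv_congr a (dirDeriv_congr b (eventuallyEq_row_of_eigenpair heig k))).eq_of_nhds
  rw [dirDeriv_dirDeriv_sum fun j _ => (hA j).mul (hvj j), dirDeriv_dirDeriv_mul hμ (hvj k)] at h
  simp only [dirDeriv_dirDeriv_mul (hA _) (hvj _), Finset.sum_add_distrib, hq, hvq, diagonal_apply,
    Pi.single_apply, eigenvalue_eq_of_diagonal hq hvq heig.self_of_nhds, mul_ite, ite_mul, mul_one,
    mul_zero, zero_mul, Finset.sum_ite_eq, Finset.sum_ite_eq', Finset.mem_univ, if_true] at h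
  rw [Finset.sum_add_distrib]
  linear_combination h

theorem dirDeriv_dirDeriv_eigenvalue (hA : ∀ i j, ContDiffAt 𝕜 2 (A · i j) q)
    (hq : A q = diagonal d) (hd : ∀ l ≠ k, d k ≠ d l)
    (heig : ∀ᶠ x in 𝓝 q, A x *ᵥ v x = μ x • v x) (hvq : v q = Pi.single k 1)
    (hv : ContDiffAt 𝕜 2 v q) :
    ∂[a] (∂[b] μ) q = ∂[a] (∂[b] (A · k k)) q + ∑ l ∈ Finset.univ.erase k,
      (∂[a] (A · k l) q * ∂[b] (A · l k) q + ∂[b] (A · k l) q * ∂[a] (A · l k) q)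
        / (d k - d l) := by
  have hμ : ContDiffAt 𝕜 2 μ q := contDiffAt_eigenvalue (hA k) heig hv (by simp [hvq])
  have dA i j := (hA i j).differentiableAt two_ne_zero
  have dμ := hμ.differentiableAt two_ne_zero
  have dv := hv.differentiableAt two_ne_zero
  have eigenvalue (c : E) : ∂[c] μ q = ∂[c] (A · k k) q :=
    dirDeriv_eigenvalue (dA k) hq heig hvq dμ dv
  have off_diagonal : ∀ l ∈ Finset.univ.erase k,
      ∂[a] (A · k l) q * ∂[b] (v · l) q + ∂[b] (A · k l) q * ∂[a] (v · l) q =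
        (∂[a] (A · k l) q * ∂[b] (A · l k) q + ∂[b] (A · k l) q * ∂[a] (A · l k) q)
          / (d k - d l) := fun l hl => by
    have eigenvector (c : E) : ∂[c] (v · l) q = ∂[c] (A · l k) q / (d k - d l) :=
      dirDeriv_eigenvector (hd l (Finset.ne_of_mem_erase hl)) (dA l) hq heig hvq dμ dv
    rw [eigenvector a, eigenvector b]
    ring
  have row := dirDeriv_dirDeriv_row_of_eigenpair (a := a) (b := b) (hA k) hq heig hvq hμ hv
  rw [← Finset.add_sum_erase _ _ (Finset.mem_univ k), Finset.sum_congr rfl off_diagonal,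
    eigenvalue a, eigenvalue b] at row
  linear_combination -row

end EigenpairField

section Hessian

variable {𝕜 : Type*} [NontriviallyNormedField 𝕜] {E : Type*} [NormedAddCommGroup E]
  [NormedSpace 𝕜 E] {ι : Type*} {e : ι → E} {Ψ : E → 𝕜} {q : E}

/-- The matrix of second derivatives of `Ψ` at `x` along a family of vectors `e`; for the standard
basis this is the Hessian. -/
noncomputable def hessianMatrix (e : ι → E) (Ψ : E → 𝕜) (x : E) : Matrix ι ι 𝕜 :=
  .of fun i j => ∂[e i] (∂[e j] Ψ) x

theorem hessianMatrix_apply (i j : ι) : (hessianMatrix e Ψ · i j) = ∂[e i] (∂[e j] Ψ) :=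
  rfl

theorem contDiffAt_hessianMatrix_apply {m n : WithTop ℕ∞} (hΨ : ContDiffAt 𝕜 n Ψ q)
    (hmn : m + 1 + 1 ≤ n) (i j : ι) : ContDiffAt 𝕜 m (hessianMatrix e Ψ · i j) q :=
  contDiffAt_dirDeriv (e i) (contDiffAt_dirDeriv (e j) hΨ hmn) le_rfl

variable [IsRCLikeNormedField 𝕜]

theorem dirDeriv_hessianMatrix_symm (hΨ : ContDiffAt 𝕜 2 Ψ q) (a : E) (i j : ι) :
    ∂[a] (hessianMatrix e Ψ · i j) q = ∂[a] (hessianMatrix e Ψ · j i) q :=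
  (dirDeriv_congr a (dirDeriv_comm_eventuallyEq (e i) (e j) hΨ)).eq_of_nhds

theorem dirDeriv_hessianMatrix_apply (hΨ : ContDiffAt 𝕜 3 Ψ q) (a : E) (i j : ι) :
    ∂[a] (hessianMatrix e Ψ · i j) q = ∂[e i] (∂[a] (∂[e j] Ψ)) q :=
  dirDeriv_comm a (e i) (contDiffAt_dirDeriv (e j) hΨ (by norm_num))

theorem dirDeriv_hessianMatrix_eventuallyEq (hΨ : ContDiffAt 𝕜 3 Ψ q) (a : E) (i j : ι) :
    ∂[a] (hessianMatrix e Ψ · i j) =ᶠ[𝓝 q] ∂[e i] (∂[e j] (∂[a] Ψ)) :=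
  (dirDeriv_comm_eventuallyEq a (e i) (contDiffAt_dirDeriv (e j) hΨ (by norm_num))).trans
    (dirDeriv_congr (e i) (dirDeriv_comm_eventuallyEq a (e j) (hΨ.of_le (by norm_num))))

theorem eigenframe_mixed_second_deriv_eigenvalue_general [Fintype ι] [DecidableEq ι]
    (hΨ : ContDiffAt 𝕜 4 Ψ q) {d : ι → 𝕜} (hdiag : hessianMatrix e Ψ q = diagonal d) {k : ι}
    (hd : ∀ l ≠ k, d k ≠ d l) {μ : E → 𝕜} {v : E → ι → 𝕜}
    (heig : ∀ᶠ x in 𝓝 q, hessianMatrix e Ψ x *ᵥ v x = μ x • v x) (hvq : v q = Pi.single k 1)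
    (hv : ContDiffAt 𝕜 2 v q) (a b : E) :
    ∂[a] (∂[b] μ) q = ∂[a] (∂[e k] (∂[e k] (∂[b] Ψ))) q + ∑ l ∈ Finset.univ.erase k,
      2 * ∂[a] (∂[e k] (∂[e l] Ψ)) q * ∂[e k] (∂[b] (∂[e l] Ψ)) q / (d k - d l) := by
  have hΨ₃ : ContDiffAt 𝕜 3 Ψ q := hΨ.of_le (by norm_num)
  have hΨ₂ : ContDiffAt 𝕜 2 Ψ q := hΨ.of_le (by norm_num)
  have hA := contDiffAt_hessianMatrix_apply (m := 2) (e := e) hΨ (by norm_num)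
  rw [dirDeriv_dirDeriv_eigenvalue hA hdiag hd heig hvq hv,
    (dirDeriv_congr a (dirDeriv_hessianMatrix_eventuallyEq hΨ₃ b k k)).eq_of_nhds]
  congr 1
  refine Finset.sum_congr rfl fun l _ => ?_
  rw [dirDeriv_hessianMatrix_symm hΨ₂ a l k, dirDeriv_hessianMatrix_symm hΨ₂ b l k,
    dirDeriv_hessianMatrix_apply hΨ₃ b k l, hessianMatrix_apply k l]
  ring

end Hessian

theorem pd_eq_dirDeriv (i : Fin 3) : pd i = dirDeriv (EuclideanSpace.single i (1 : ℝ)) := rfl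

/-- Eigenframe identity for the mixed second derivative of the first eigenvalue field:
`∂ₓ∂ᵧλ₁ = T₁₁₁₂ + 2T₁₁₂T₁₂₂/(T₁₁ − T₂₂) + 2T₁₁₃T₁₂₃/(T₁₁ − T₃₃)`. -/
theorem eigenframe_mixed_second_deriv_eigenvalue
    (Ψ : EuclideanSpace ℝ (Fin 3) → ℝ) (hΨ : ContDiff ℝ 4 Ψ)
    (q : EuclideanSpace ℝ (Fin 3)) (l1 l2 l3 : ℝ)
    (hdiag : (Matrix.of fun i j => pd i (pd j Ψ) q) = Matrix.diagonal ![l1, l2, l3])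
    (h12 : l1 ≠ l2) (h13 : l1 ≠ l3)
    (μ : EuclideanSpace ℝ (Fin 3) → ℝ)
    (v : EuclideanSpace ℝ (Fin 3) → EuclideanSpace ℝ (Fin 3))
    (U : Set (EuclideanSpace ℝ (Fin 3))) (hU : U ∈ nhds q)
    (heig : ∀ x ∈ U, ∀ i : Fin 3, (∑ j : Fin 3, pd i (pd j Ψ) x * v x j) = μ x * v x i)
    (hnorm : ∀ x ∈ U, ‖v x‖ = 1)
    (hvq : v q = EuclideanSpace.single 0 1)
    (hμ : ContDiffAt ℝ 2 μ q) (hv : ContDiffAt ℝ 2 v q) :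
    pd 0 (pd 1 μ) q =
      pd 0 (pd 0 (pd 0 (pd 1 Ψ))) q
        + 2 * pd 0 (pd 0 (pd 1 Ψ)) q * pd 0 (pd 1 (pd 1 Ψ)) q / (l1 - l2)
        + 2 * pd 0 (pd 0 (pd 2 Ψ)) q * pd 0 (pd 1 (pd 2 Ψ)) q / (l1 - l3) := by
  have hv' : ContDiffAt ℝ 2 (fun x => (v x).ofLp) q := contDiffAt_pi.2 ((contDiffAt_piLp 2).1 hv)
  have others : Finset.univ.erase (0 : Fin 3) = {1, 2} := by decide
  simpa [pd_eq_dirDeriv, others, add_assoc] using eigenframe_mixed_second_deriv_eigenvalue_general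
    (e := fun i => EuclideanSpace.single i 1) (k := 0) hΨ.contDiffAt hdiag
    (by simp [Fin.forall_fin_succ, h12, h13]) (mem_of_superset hU fun x hx => funext (heig x hx))
    (congrArg _ hvq) hv' (EuclideanSpace.single 0 1) (EuclideanSpace.single 1 1)
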